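/- If in addition f'(x_i) ≠ 0 for every data point x_i, then the mean shift sequence is eventually monotone: there exists N such that either y_{j+1} ≥ y_j for all j ≥ N, or y_{j+1} ≤ y_j for all j ≥ N; consequently (y_j) converges. -/

import Mathlib

open Filter Finset

/-! Huygens' identity and the gradient inequality for the convex profile `k` show that a mean shift
step `z ↦ T z` raises the kernel density estimate by at least a multiple of `‖T z - z‖²`, so the
increments of a mean shift sequence tend to zero. If such a sequence on the line did not converge,
an interval of cluster points would consist of fixed points of `T`, and the sequence would become
stationary on its first visit there. Hence it converges to a fixed point `l`.

For monotonicity, an orbit cannot jump from `z` over a fixed point `p > z` when no data point lies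
strictly between them: moving from `p` to `z` increases the weights of the data points below `p` and
decreases those of the data points above `p`. Near `l` there is no data point except possibly `l`
itself. So the sequence eventually stays on one side of `l`, where it cannot jump over a fixed point
from below, and where by the intermediate value theorem it cannot turn back after moving up. -/

section Sequences

theorem eventually_or_eventually_not_of_imp_succ {P : ℕ → Prop}
    (hP : ∀ᶠ j in atTop, P j → P (j + 1)) :
    (∀ᶠ j in atTop, P j) ∨ ∀ᶠ j in atTop, ¬ P j := by
  refine or_iff_not_imp_right.2 fun hfreq ↦ ?_
  obtain ⟨N, hN⟩ := eventually_atTop.1 hP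
  obtain ⟨M, hNM, hM⟩ := frequently_atTop.1 hfreq N
  refine eventually_atTop.2 ⟨M, fun j hj ↦ ?_⟩
  induction j, hj using Nat.le_induction with
  | base => exact hM
  | succ j hj ih => exact hN j (hNM.trans hj) ih

theorem tendsto_zero_of_le_sub_succ {s δ : ℕ → ℝ} (hs : BddAbove (Set.range s))
    (hδ : ∀ j, 0 ≤ δ j) (hle : ∀ j, δ j ≤ s (j + 1) - s j) : Tendsto δ atTop (nhds 0) := by
  have hmono : Monotone s := monotone_nat_of_le_succ fun j ↦ sub_nonneg.1 ((hδ j).trans (hle j))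
  have hlim := tendsto_atTop_ciSup hmono hs
  have hsub := (hlim.comp (tendsto_add_atTop_nat 1)).sub hlim
  rw [sub_self] at hsub
  exact squeeze_zero hδ hle hsub

variable {u : ℕ → ℝ} {a b c : ℝ}

theorem frequently_mem_Icc_of_tendsto_sub_zero
    (hu : Tendsto (fun j ↦ u (j + 1) - u j) atTop (nhds 0)) (hab : a < b)
    (ha : ∃ᶠ j in atTop, u j < a) (hb : ∃ᶠ j in atTop, b < u j) :
    ∃ᶠ j in atTop, u j ∈ Set.Icc a b := by
  intro hout
  have hstay : ∀ᶠ j in atTop, u j < a → u (j + 1) < a := by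
    filter_upwards [hu.eventually_lt_const (sub_pos.2 hab),
      (tendsto_add_atTop_nat 1).eventually hout] with j hstep hj hja
    by_contra! hle
    exact hj ⟨hle, by linarith⟩
  rcases eventually_or_eventually_not_of_imp_succ hstay with hlt | hge
  · obtain ⟨j, hbj, hja⟩ := (hb.and_eventually hlt).exists
    exact lt_asymm hab (hbj.trans hja)
  · exact ha hge

theorem mapClusterPt_of_tendsto_sub_zero
    (hu : Tendsto (fun j ↦ u (j + 1) - u j) atTop (nhds 0))
    (ha : ∃ᶠ j in atTop, u j < a) (hb : ∃ᶠ j in atTop, b < u j) (hc : c ∈ Set.Ioo a b) :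
    MapClusterPt c atTop u := by
  refine mapClusterPt_iff_frequently.2 fun s hs ↦ ?_
  obtain ⟨d, ⟨hcd, hdb⟩, hds⟩ := exists_Ico_subset_of_mem_nhds' hs hc.2
  obtain ⟨e, hce, hed⟩ := exists_between hcd
  have hfreq := frequently_mem_Icc_of_tendsto_sub_zero hu hce
    (ha.mono fun j hj ↦ hj.trans hc.1) (hb.mono fun j hj ↦ (hed.trans_le hdb).trans hj)
  exact hfreq.mono fun j hj ↦ hds ⟨hj.1, hj.2.trans_lt hed⟩

end Sequences

section Iteration

theorem isFixedPt_of_mapClusterPt {α G : Type*} [AddGroup G] [TopologicalSpace G] [ContinuousSub G]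
    [T2Space G] {F : Filter α} {T : G → G} {u : α → G} {c : G} (hT : ContinuousAt T c)
    (hu : Tendsto (fun j ↦ T (u j) - u j) F (nhds 0)) (hc : MapClusterPt c F u) :
    Function.IsFixedPt T c := by
  have hcluster : MapClusterPt (T c - c) F fun j ↦ T (u j) - u j :=
    hc.continuousAt_comp (hT.sub continuousAt_id)
  have : (nhds (T c - c) ⊓ nhds 0).NeBot := hcluster.clusterPt.mono hu
  exact sub_eq_zero.1 (eq_of_nhds_neBot this)

theorem map_le_map_map_of_le_map {T : ℝ → ℝ} {a : ℝ} (ha : a ≤ T a)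
    (hT : ContinuousOn T (Set.Icc a (T a)))
    (hbarrier : ∀ p ∈ Set.Icc a (T a), Function.IsFixedPt T p → T a ≤ p) :
    T a ≤ T (T a) := by
  by_contra! hlt
  obtain ⟨p, hp, hfix⟩ := exists_mem_Icc_isFixedPt hT ha ha hlt.le
  obtain rfl : p = T a := le_antisymm hp.2 (hbarrier p hp hfix)
  exact hlt.ne hfix

variable {T : ℝ → ℝ} {u : ℕ → ℝ}

theorem exists_tendsto_of_tendsto_sub_zero (hT : Continuous T) (hu : ∀ j, u (j + 1) = T (u j))
    (hbdd : Bornology.IsBounded (Set.range u))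
    (hstep : Tendsto (fun j ↦ u (j + 1) - u j) atTop (nhds 0)) :
    ∃ l, Tendsto u atTop (nhds l) := by
  refine tendsto_of_no_upcrossings dense_univ ?_
    hbdd.bddAbove.isBoundedUnder_of_range hbdd.bddBelow.isBoundedUnder_of_range
  rintro a - b - hab ⟨ha, hb⟩
  have hfix : ∀ c ∈ Set.Ioo a b, Function.IsFixedPt T c := fun c hc ↦
    isFixedPt_of_mapClusterPt hT.continuousAt (by simpa only [hu] using hstep)
      (mapClusterPt_of_tendsto_sub_zero hstep ha hb hc)
  obtain ⟨c, hc⟩ := exists_between hab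
  have hvisit : ∃ᶠ j in atTop, u j ∈ Set.Ioo a b :=
    (mapClusterPt_of_tendsto_sub_zero hstep ha hb hc).frequently (Ioo_mem_nhds hc.1 hc.2)
  have hinside : ∀ j, u j ∈ Set.Ioo a b → u (j + 1) ∈ Set.Ioo a b := fun j hj ↦ by
    rwa [hu, hfix _ hj]
  rcases eventually_or_eventually_not_of_imp_succ (.of_forall hinside) with hin | hout
  · obtain ⟨j, hja, hj⟩ := (ha.and_eventually hin).exists
    exact lt_asymm hja hj.1
  · exact hvisit hout

theorem eventually_monotone_of_eventually_mem {S : Set ℝ} [S.OrdConnected] (hT : ContinuousOn T S)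
    (hbarrier : ∀ p ∈ S, ∀ z ∈ S, Function.IsFixedPt T p → z ≤ p → T z ≤ p)
    (hu : ∀ j, u (j + 1) = T (u j)) (hS : ∀ᶠ j in atTop, u j ∈ S) :
    (∀ᶠ j in atTop, u j ≤ u (j + 1)) ∨ ∀ᶠ j in atTop, u (j + 1) ≤ u j := by
  have hup : ∀ᶠ j in atTop, u j ≤ u (j + 1) → u (j + 1) ≤ u (j + 1 + 1) := by
    filter_upwards [hS, (tendsto_add_atTop_nat 1).eventually hS] with j hj hj'
    rw [hu (j + 1), hu j] at *
    have hsub : Set.Icc (u j) (T (u j)) ⊆ S := Set.Icc_subset S hj hj'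
    exact fun hle ↦ map_le_map_map_of_le_map hle (hT.mono hsub)
      fun p hp hfix ↦ hbarrier p (hsub hp) (u j) hj hfix hp.1
  exact (eventually_or_eventually_not_of_imp_succ hup).imp_right
    fun hdown ↦ hdown.mono fun j hj ↦ (not_le.1 hj).le

end Iteration

section Profile

theorem mul_sub_le_sub_of_convexOn {s : Set ℝ} {φ : ℝ → ℝ} {φ' a b : ℝ} (hφ : ConvexOn ℝ s φ)
    (ha : a ∈ s) (hb : b ∈ s) (hderiv : HasDerivWithinAt φ φ' s a) :
    φ' * (b - a) ≤ φ b - φ a := by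
  rcases lt_trichotomy a b with hab | rfl | hba
  · have hslope := hφ.le_slope_of_hasDerivWithinAt ha hb hab hderiv
    rwa [slope_def_field, le_div_iff₀ (sub_pos.2 hab)] at hslope
  · simp
  · have hslope := hφ.slope_le_of_hasDerivWithinAt hb ha hba hderiv
    rw [slope_def_field, div_le_iff₀ (sub_pos.2 hba)] at hslope
    linarith

theorem monotoneOn_of_convexOn_of_hasDerivWithinAt {s : Set ℝ} {φ φ' : ℝ → ℝ}
    (hφ : ConvexOn ℝ s φ) (hderiv : ∀ t ∈ s, HasDerivWithinAt φ (φ' t) s t) :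
    MonotoneOn φ' s := by
  intro a ha b hb hab
  have hfrom_a := mul_sub_le_sub_of_convexOn hφ ha hb (hderiv a ha)
  have hfrom_b := mul_sub_le_sub_of_convexOn hφ hb ha (hderiv b hb)
  rcases hab.eq_or_lt with rfl | hlt
  · rfl
  · exact le_of_mul_le_mul_right (by linarith) (sub_pos.2 hlt)

theorem apply_sq_div_le_of_abs_le {g : ℝ → ℝ} (hg : AntitoneOn g (Set.Ici 0)) {r s : ℝ}
    (hrs : |r| ≤ |s|) (h : ℝ) : g ((s / h) ^ 2) ≤ g ((r / h) ^ 2) := by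
  refine hg (Set.mem_Ici.2 (sq_nonneg _)) (Set.mem_Ici.2 (sq_nonneg _)) (sq_le_sq.2 ?_)
  rw [abs_div, abs_div]
  gcongr

end Profile

section CenterMass

theorem sum_smul_centerMass_sub {ι R E : Type*} [Field R] [AddCommGroup E] [Module R E]
    {t : Finset ι} {w : ι → R} (x : ι → E) (hw : ∑ i ∈ t, w i ≠ 0) (p : E) :
    (∑ i ∈ t, w i) • (t.centerMass w x - p) = ∑ i ∈ t, w i • (x i - p) := by
  simp only [centerMass, smul_sub, smul_inv_smul₀ hw, sum_sub_distrib, sum_smul]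

/-- Huygens' identity, also known as the parallel axis theorem. -/
theorem sum_mul_norm_sub_sq_sub_centerMass {ι E : Type*} [NormedAddCommGroup E]
    [InnerProductSpace ℝ E] {t : Finset ι} {w : ι → ℝ} (x : ι → E) (hw : ∑ i ∈ t, w i ≠ 0) (z : E) :
    ∑ i ∈ t, w i * (‖z - x i‖ ^ 2 - ‖t.centerMass w x - x i‖ ^ 2) =
      (∑ i ∈ t, w i) * ‖t.centerMass w x - z‖ ^ 2 := by
  set m := t.centerMass w x with hm
  have hcross : ∑ i ∈ t, w i * inner ℝ (x i - m) (z - m) = 0 := by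
    have hzero := sum_smul_centerMass_sub x hw m
    rw [← hm, sub_self, smul_zero] at hzero
    simp only [← real_inner_smul_left, ← sum_inner, ← hzero, inner_zero_left]
  have hexpand (i : ι) : w i * (‖z - x i‖ ^ 2 - ‖m - x i‖ ^ 2) =
      w i * ‖m - z‖ ^ 2 - 2 * (w i * inner ℝ (x i - m) (z - m)) := by
    rw [← sub_sub_sub_cancel_right z (x i) m, norm_sub_sq_real, real_inner_comm,
      norm_sub_rev m, norm_sub_rev m]
    ring
  simp only [hexpand, sum_sub_distrib, ← mul_sum, ← sum_mul, hcross, mul_zero, sub_zero]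

end CenterMass

section KernelSum

variable {ι E : Type*} [Fintype ι] [NormedAddCommGroup E] {k g : ℝ → ℝ} {x : ι → E} {h : ℝ}

/-- The unnormalized kernel sum at `z` of the data `x` with profile `k` and bandwidth `h`. For
`k` itself it is the kernel density estimate up to a constant factor, and for `g = -k'` it is the
total weight in the mean shift map. -/
noncomputable def kernelSum (k : ℝ → ℝ) (x : ι → E) (h : ℝ) (z : E) : ℝ :=
  ∑ i, k ((‖z - x i‖ / h) ^ 2)

theorem kernelSum_pos [Nonempty ι] (hg : ∀ t, 0 ≤ t → 0 < g t) (z : E) :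
    0 < kernelSum g x h z :=
  sum_pos (fun _ _ ↦ hg _ (sq_nonneg _)) univ_nonempty

theorem exists_pos_le_kernelSum [Nonempty ι] (hanti : AntitoneOn g (Set.Ici 0))
    (hpos : ∀ t, 0 ≤ t → 0 < g t) (x : ι → E) (h : ℝ) {s : Set E}
    (hs : Bornology.IsBounded s) : ∃ γ > 0, ∀ z ∈ s, γ ≤ kernelSum g x h z := by
  obtain ⟨i⟩ := ‹Nonempty ι›
  obtain ⟨R, hR⟩ := hs.subset_closedBall (x i)
  refine ⟨g ((R / h) ^ 2), hpos _ (sq_nonneg _), fun z hz ↦ ?_⟩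
  have hdist : |‖z - x i‖| ≤ |R| := by
    rw [abs_norm, ← dist_eq_norm]
    exact (hR hz).trans (le_abs_self R)
  exact (apply_sq_div_le_of_abs_le hanti hdist h).trans
    (single_le_sum (f := fun i ↦ g ((‖z - x i‖ / h) ^ 2))
      (fun _ _ ↦ (hpos _ (sq_nonneg _)).le) (mem_univ i))

theorem bddAbove_range_kernelSum (hk : AntitoneOn k (Set.Ici 0)) (x : ι → E) (h : ℝ) :
    BddAbove (Set.range (kernelSum k x h)) := by
  refine ⟨∑ _i : ι, k 0, ?_⟩
  rintro _ ⟨z, rfl⟩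
  exact sum_le_sum fun i _ ↦ hk Set.self_mem_Ici (Set.mem_Ici.2 (sq_nonneg _)) (sq_nonneg _)

end KernelSum

section MeanShift

variable {ι E : Type*} [Fintype ι] [NormedAddCommGroup E] {k g : ℝ → ℝ} {x : ι → E} {h : ℝ}

section NormedSpace

variable [NormedSpace ℝ E]

/-- The mean shift map of the data `x` with weight profile `g = -k'` and bandwidth `h`, encoded as a
center of mass of the data; it is `0` where the weights sum to `0`. -/
noncomputable def meanShift (g : ℝ → ℝ) (x : ι → E) (h : ℝ) (z : E) : E :=
  univ.centerMass (fun i ↦ g ((‖z - x i‖ / h) ^ 2)) x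

theorem continuous_meanShift [Nonempty ι] (hcont : ContinuousOn g (Set.Ici 0))
    (hpos : ∀ t, 0 ≤ t → 0 < g t) : Continuous (meanShift g x h) := by
  have hweight (i : ι) : Continuous fun z : E ↦ g ((‖z - x i‖ / h) ^ 2) :=
    hcont.comp_continuous (by fun_prop) fun _ ↦ Set.mem_Ici.2 (sq_nonneg _)
  have htotal : Continuous (kernelSum g x h) := continuous_finsetSum _ fun i _ ↦ hweight i
  exact (htotal.inv₀ fun z ↦ (kernelSum_pos hpos z).ne').smul
    (continuous_finsetSum _ fun i _ ↦ (hweight i).smul continuous_const)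

theorem meanShift_mem_convexHull [Nonempty ι] (hg : ∀ t, 0 ≤ t → 0 < g t) (z : E) :
    meanShift g x h z ∈ convexHull ℝ (Set.range x) :=
  univ.centerMass_mem_convexHull (fun _ _ ↦ (hg _ (sq_nonneg _)).le) (kernelSum_pos hg z)
    fun i _ ↦ Set.mem_range_self i

theorem isBounded_range_of_eq_meanShift [Nonempty ι] (hg : ∀ t, 0 ≤ t → 0 < g t) {y : ℕ → E}
    (hy : ∀ j, y (j + 1) = meanShift g x h (y j)) : Bornology.IsBounded (Set.range y) := by
  have hhull : Bornology.IsBounded (convexHull ℝ (Set.range x)) :=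
    isBounded_convexHull.2 (Set.finite_range x).isBounded
  refine (hhull.insert (y 0)).subset ?_
  rintro _ ⟨_ | j, rfl⟩
  · exact Set.mem_insert _ _
  · exact Set.mem_insert_of_mem _ (hy j ▸ meanShift_mem_convexHull hg _)

end NormedSpace

section InnerProductSpace

variable [InnerProductSpace ℝ E]

theorem kernelSum_mul_norm_sub_sq_le [Nonempty ι] (hconv : ConvexOn ℝ (Set.Ici 0) k)
    (hderiv : ∀ t, 0 ≤ t → HasDerivWithinAt k (-g t) (Set.Ici 0) t)
    (hpos : ∀ t, 0 ≤ t → 0 < g t) (x : ι → E) (h : ℝ) (z : E) :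
    kernelSum g x h z * (‖meanShift g x h z - z‖ / h) ^ 2 ≤
      kernelSum k x h (meanShift g x h z) - kernelSum k x h z := by
  set m := meanShift g x h z
  have hhuygens : ∑ i, g ((‖z - x i‖ / h) ^ 2) * (‖z - x i‖ ^ 2 - ‖m - x i‖ ^ 2) =
      kernelSum g x h z * ‖m - z‖ ^ 2 :=
    sum_mul_norm_sub_sq_sub_centerMass x (kernelSum_pos hpos z).ne' z
  calc kernelSum g x h z * (‖m - z‖ / h) ^ 2
      = ∑ i, g ((‖z - x i‖ / h) ^ 2) * ((‖z - x i‖ / h) ^ 2 - (‖m - x i‖ / h) ^ 2) := by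
        rw [div_pow, ← mul_div_assoc, ← hhuygens, sum_div]
        exact sum_congr rfl fun i _ ↦ by ring
    _ ≤ ∑ i, (k ((‖m - x i‖ / h) ^ 2) - k ((‖z - x i‖ / h) ^ 2)) := by
        refine sum_le_sum fun i _ ↦ ?_
        have hgrad := mul_sub_le_sub_of_convexOn hconv (b := (‖m - x i‖ / h) ^ 2)
          (Set.mem_Ici.2 (sq_nonneg _)) (Set.mem_Ici.2 (sq_nonneg _))
          (hderiv ((‖z - x i‖ / h) ^ 2) (sq_nonneg _))
        linarith
    _ = kernelSum k x h m - kernelSum k x h z := sum_sub_distrib _ _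

theorem tendsto_sub_zero_of_eq_meanShift [Nonempty ι] (hh : h ≠ 0)
    (hconv : ConvexOn ℝ (Set.Ici 0) k)
    (hderiv : ∀ t, 0 ≤ t → HasDerivWithinAt k (-g t) (Set.Ici 0) t)
    (hpos : ∀ t, 0 ≤ t → 0 < g t) {y : ℕ → E} (hy : ∀ j, y (j + 1) = meanShift g x h (y j)) :
    Tendsto (fun j ↦ y (j + 1) - y j) atTop (nhds 0) := by
  have hk_anti : AntitoneOn k (Set.Ici 0) :=
    antitoneOn_of_hasDerivWithinAt_nonpos (convex_Ici 0)
      (fun t ht ↦ (hderiv t ht).continuousWithinAt)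
      (fun t ht ↦ (hderiv t (interior_subset ht)).mono interior_subset)
      fun t ht ↦ neg_nonpos.2 (hpos t (interior_subset ht)).le
  have hg_anti : AntitoneOn g (Set.Ici 0) := by
    simpa using (monotoneOn_of_convexOn_of_hasDerivWithinAt hconv hderiv).neg
  obtain ⟨γ, hγ, hγ_le⟩ := exists_pos_le_kernelSum hg_anti hpos x h
    (isBounded_range_of_eq_meanShift hpos hy)
  have hascent (j : ℕ) : γ * (‖y (j + 1) - y j‖ / h) ^ 2 ≤
      kernelSum k x h (y (j + 1)) - kernelSum k x h (y j) := by
    rw [hy]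
    exact (mul_le_mul_of_nonneg_right (hγ_le _ ⟨j, rfl⟩) (sq_nonneg _)).trans
      (kernelSum_mul_norm_sub_sq_le hconv hderiv hpos x h (y j))
  have henergy : Tendsto (fun j ↦ γ * (‖y (j + 1) - y j‖ / h) ^ 2) atTop (nhds 0) :=
    tendsto_zero_of_le_sub_succ
      ((bddAbove_range_kernelSum hk_anti x h).mono (Set.range_comp_subset_range y _))
      (fun j ↦ by positivity) hascent
  have hsq : Tendsto (fun j ↦ ‖y (j + 1) - y j‖ ^ 2) atTop (nhds 0) := by
    have hscaled := henergy.const_mul (h ^ 2 / γ)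
    rw [mul_zero] at hscaled
    exact hscaled.congr fun j ↦ by field_simp
  exact tendsto_zero_iff_norm_tendsto_zero.2 (by simpa [Real.sqrt_sq] using hsq.sqrt)

end InnerProductSpace

section Real

theorem meanShift_real (g : ℝ → ℝ) (x : ι → ℝ) (h z : ℝ) :
    meanShift g x h z =
      (∑ i, x i * g (((z - x i) / h) ^ 2)) / ∑ i, g (((z - x i) / h) ^ 2) := by
  simp only [meanShift, centerMass, smul_eq_mul, Real.norm_eq_abs, div_pow, sq_abs]
  rw [inv_mul_eq_div]
  simp only [mul_comm]

variable [Nonempty ι] {x : ι → ℝ}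

theorem meanShift_le_of_isFixedPt (hanti : AntitoneOn g (Set.Ici 0))
    (hpos : ∀ t, 0 ≤ t → 0 < g t) {p z : ℝ} (hp : Function.IsFixedPt (meanShift g x h) p)
    (hzp : z ≤ p) (hx : ∀ i, x i ∉ Set.Ioo z p) : meanShift g x h z ≤ p := by
  have hbalance (q : ℝ) : kernelSum g x h q * (meanShift g x h q - p) =
      ∑ i, g ((‖q - x i‖ / h) ^ 2) * (x i - p) :=
    sum_smul_centerMass_sub x (kernelSum_pos hpos q).ne' p
  have hterm (i : ι) : g ((‖z - x i‖ / h) ^ 2) * (x i - p) ≤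
      g ((‖p - x i‖ / h) ^ 2) * (x i - p) := by
    rcases le_or_gt p (x i) with hpx | hxp
    · refine mul_le_mul_of_nonneg_right (apply_sq_div_le_of_abs_le hanti ?_ h) (sub_nonneg.2 hpx)
      simp only [Real.norm_eq_abs, abs_abs]
      exact abs_le_abs_of_nonpos (sub_nonpos.2 hpx) (sub_le_sub_right hzp _)
    · have hxz : x i ≤ z := not_lt.1 fun hzx ↦ hx i ⟨hzx, hxp⟩
      refine mul_le_mul_of_nonpos_right (apply_sq_div_le_of_abs_le hanti ?_ h) (sub_nonpos.2 hxp.le)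
      simp only [Real.norm_eq_abs, abs_abs]
      exact abs_le_abs_of_nonneg (sub_nonneg.2 hxz) (sub_le_sub_right hzp _)
  have hle : kernelSum g x h z * (meanShift g x h z - p) ≤ 0 := by
    calc kernelSum g x h z * (meanShift g x h z - p)
        ≤ kernelSum g x h p * (meanShift g x h p - p) := by
          rw [hbalance, hbalance]
          exact sum_le_sum fun i _ ↦ hterm i
      _ = 0 := by rw [hp, sub_self, mul_zero]
  exact sub_nonpos.1 (nonpos_of_mul_nonpos_right hle (kernelSum_pos hpos z))

theorem eventually_monotone_of_tendsto_of_eq_meanShift (hanti : AntitoneOn g (Set.Ici 0))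
    (hcont : ContinuousOn g (Set.Ici 0)) (hpos : ∀ t, 0 ≤ t → 0 < g t) {y : ℕ → ℝ} {l : ℝ}
    (hy : ∀ j, y (j + 1) = meanShift g x h (y j)) (hl : Tendsto y atTop (nhds l)) :
    (∀ᶠ j in atTop, y j ≤ y (j + 1)) ∨ ∀ᶠ j in atTop, y (j + 1) ≤ y j := by
  have hT : Continuous (meanShift g x h) := continuous_meanShift hcont hpos
  have hfix : Function.IsFixedPt (meanShift g x h) l := by
    refine tendsto_nhds_unique ((hT.tendsto l).comp hl) ?_
    simpa only [Function.comp_def, hy] using hl.comp (tendsto_add_atTop_nat 1)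
  have hisolated : (Set.range x \ {l})ᶜ ∈ nhds l :=
    ((Set.finite_range x).sdiff).isClosed.isOpen_compl.mem_nhds fun hl ↦ hl.2 rfl
  obtain ⟨a, b, ⟨hal, hlb⟩, hab⟩ := mem_nhds_iff_exists_Ioo_subset.1 hisolated
  have hdata (i : ι) (hi : x i ∈ Set.Ioo a b) : x i = l :=
    by_contra fun hne ↦ hab hi ⟨⟨i, rfl⟩, hne⟩
  have hbarrier : ∀ p ∈ Set.Ioo a b, ∀ z ∈ Set.Ioo a b, Function.IsFixedPt (meanShift g x h) p →
      z ≤ p → l ∉ Set.Ioo z p → meanShift g x h z ≤ p := fun p hp z hz hpfix hzp hlzp ↦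
    meanShift_le_of_isFixedPt hanti hpos hpfix hzp fun i hi ↦
      hlzp (hdata i ⟨hz.1.trans hi.1, hi.2.trans hp.2⟩ ▸ hi)
  have hnear : ∀ᶠ j in atTop, y j ∈ Set.Ioo a b := hl.eventually (Ioo_mem_nhds hal hlb)
  have hstay : ∀ᶠ j in atTop, y j ≤ l → y (j + 1) ≤ l := by
    filter_upwards [hnear] with j hj hjl
    exact hy j ▸ hbarrier l ⟨hal, hlb⟩ (y j) hj hfix hjl fun hlt ↦ hlt.2.false
  rcases eventually_or_eventually_not_of_imp_succ hstay with hle | hgt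
  · have hsub : Set.Ioc a l ⊆ Set.Ioo a b := Set.Ioc_subset_Ioo_right hlb
    refine eventually_monotone_of_eventually_mem (S := Set.Ioc a l) hT.continuousOn ?_ hy
      (by filter_upwards [hnear, hle] with j hj hjl using ⟨hj.1, hjl⟩)
    exact fun p hp z hz hpfix hzp ↦
      hbarrier p (hsub hp) z (hsub hz) hpfix hzp fun hlt ↦ hlt.2.not_ge hp.2
  · have hsub : Set.Ioo l b ⊆ Set.Ioo a b := Set.Ioo_subset_Ioo_left hal.le
    refine eventually_monotone_of_eventually_mem (S := Set.Ioo l b) hT.continuousOn ?_ hy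
      (by filter_upwards [hnear, hgt] with j hj hjl using ⟨not_le.1 hjl, hj.2⟩)
    exact fun p hp z hz hpfix hzp ↦
      hbarrier p (hsub hp) z (hsub hz) hpfix hzp fun hlt ↦ hlt.1.not_gt hz.1

end Real

end MeanShift

theorem mean_shift_eventually_monotone_of_deriv_ne_zero_general {ι : Type*} [Fintype ι] [Nonempty ι]
    (x : ι → ℝ) {h : ℝ} (hh : h ≠ 0) {k g : ℝ → ℝ} (hk_conv : ConvexOn ℝ (Set.Ici 0) k)
    (hk_deriv : ∀ t ∈ Set.Ici (0 : ℝ), HasDerivWithinAt k (-g t) (Set.Ici 0) t)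
    (hg_cont : ContinuousOn g (Set.Ici 0)) (hg_pos : ∀ t ∈ Set.Ici (0 : ℝ), 0 < g t)
    (y : ℕ → ℝ) (hy : ∀ j, y (j + 1) =
      (∑ i, x i * g (((y j - x i) / h) ^ 2)) / ∑ i, g (((y j - x i) / h) ^ 2)) :
    (∃ N : ℕ, (∀ j ≥ N, y j ≤ y (j + 1)) ∨ (∀ j ≥ N, y (j + 1) ≤ y j)) ∧
      ∃ ystar : ℝ, Tendsto y atTop (nhds ystar) := by
  replace hy : ∀ j, y (j + 1) = meanShift g x h (y j) := by simpa only [meanShift_real] using hy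
  have hg_anti : AntitoneOn g (Set.Ici 0) := by
    simpa using (monotoneOn_of_convexOn_of_hasDerivWithinAt hk_conv hk_deriv).neg
  obtain ⟨l, hl⟩ := exists_tendsto_of_tendsto_sub_zero (continuous_meanShift hg_cont hg_pos) hy
    (isBounded_range_of_eq_meanShift hg_pos hy)
    (tendsto_sub_zero_of_eq_meanShift hh hk_conv hk_deriv hg_pos hy)
  refine ⟨?_, l, hl⟩
  rw [exists_or, ← eventually_atTop, ← eventually_atTop]
  exact eventually_monotone_of_tendsto_of_eq_meanShift hg_anti hg_cont hg_pos hy hl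

theorem mean_shift_eventually_monotone_of_deriv_ne_zero
(n : ℕ) (hn : 0 < n) (x : Fin n → ℝ) (h : ℝ) (hh : 0 < h)
(c : ℝ) (hc : 0 < c)
    (k g : ℝ → ℝ)
    (hk_nonneg : ∀ t ∈ Set.Ici (0:ℝ), 0 ≤ k t)
    (hk_conv : ConvexOn ℝ (Set.Ici 0) k)
    (hk_smooth : ContDiff ℝ 1 k)
    (hk_anti : StrictAntiOn k (Set.Ici 0))
    (hg : ∀ t, g t = -(deriv k t))
    (hg_pos : ∀ t ∈ Set.Ici (0:ℝ), 0 < g t)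
    (hg_anti : StrictAntiOn g (Set.Ici 0))
    (f T : ℝ → ℝ)
    (hf : ∀ z, f z = c / (n * h) * ∑ i, k (((z - x i) / h) ^ 2))
    (hT : ∀ z, T z = (∑ i, x i * g (((z - x i) / h) ^ 2)) / (∑ i, g (((z - x i) / h) ^ 2)))
(y : ℕ → ℝ) (hy0 : ∃ i, y 0 = x i) (hyit : ∀ j, y (j + 1) = T (y j))
    (hfx : ∀ i, deriv f (x i) ≠ 0) :
    (∃ N : ℕ, (∀ j ≥ N, y j ≤ y (j + 1)) ∨ (∀ j ≥ N, y (j + 1) ≤ y j)) ∧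
      ∃ ystar : ℝ, Tendsto y atTop (nhds ystar) := by
  have : Nonempty (Fin n) := ⟨⟨0, hn⟩⟩
  have hg_cont : Continuous g := funext hg ▸ (hk_smooth.continuous_deriv le_rfl).neg
  have hk_deriv (t : ℝ) : HasDerivAt k (-g t) t := by
    simpa only [hg, neg_neg] using (hk_smooth.differentiable one_ne_zero t).hasDerivAt
  exact mean_shift_eventually_monotone_of_deriv_ne_zero_general x hh.ne' hk_conv
    (fun t _ ↦ (hk_deriv t).hasDerivWithinAt) hg_cont.continuousOn hg_pos y
    fun j ↦ (hyit j).trans (hT (y j))
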